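/- arXiv:2512.21752 — 2 statements merged into one kernel-verified Lean document; each statement's English description precedes it below -/
import Mathlib

section
/- Let n be a natural number and p a real number with 1 < p < n. There exists a constant C > 0, depending only on n and p, such that for every measurable function g : EuclideanSpace ℝ (Fin n) → ℝ and every compactly supported continuously differentiable function u : EuclideanSpace ℝ (Fin n) → ℝ, one has (in the extended nonnegative reals) ∫ |g(x)|·|u(x)|^p dx ≤ C · W(g) · ∫ ‖Du(x)‖^p dx, where W(g) := sup over t > 0 of t·(volume {x : |g(x)| > t})^(p/n) is the weak L^(n/p) quasinorm and Du denotes the Fréchet derivative of u. -/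
open MeasureTheory Set

/-- Real arithmetic for the optimal splitting. -/
lemma ghs_arith {a w e : ℝ} (ha0 : 0 < a) (ha1 : a < 1) (hw : 0 < w) (he : 0 < e) :
    (w * e ^ (-a)) * e + w ^ (1 / a) * (-(w * e ^ (-a)) ^ (-(1 / a) + 1) / (-(1 / a) + 1))
      = (1 - a)⁻¹ * w * e ^ (1 - a) := by
  have h1 : (w * e ^ (-a)) ^ (-(1 / a) + 1) = w ^ (-(1 / a) + 1) * e ^ (1 - a) := by
    rw [Real.mul_rpow hw.le (by positivity), ← Real.rpow_mul he.le]
    congr 2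
    field_simp
    ring
  have h2 : w ^ (1 / a) * w ^ (-(1 / a) + 1) = w := by
    rw [← Real.rpow_add hw]; simp
  have h3 : e ^ (-a) * e = e ^ (1 - a) := by
    rw [← Real.rpow_add_one he.ne']; congr 1; ring
  have h4 : w ^ (1 / a) * (-(w * e ^ (-a)) ^ (-(1 / a) + 1) / (-(1 / a) + 1))
      = -(w * e ^ (1 - a)) / (-(1 / a) + 1) := by
    rw [h1]
    calc _ = -((w ^ (1 / a) * w ^ (-(1 / a) + 1)) * e ^ (1 - a)) / (-(1 / a) + 1) := by ring
      _ = _ := by rw [h2]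
  rw [h4, mul_assoc, h3]
  have h5 : (1 - a) ≠ 0 := by linarith
  have h6 : -(1 / a) + 1 ≠ 0 := by
    intro h
    field_simp at h
    apply h5; linarith
  have h7 : -(1 / a) + 1 = -(1 - a) / a := by field_simp; ring
  rw [h7]
  field_simp
  ring

/-- Kolmogorov-type bound: integral of a weak `L^{1/a}` function over a set of finite measure. -/
lemma ghs_weak {X : Type*} [MeasurableSpace X] (μ : Measure X) {a : ℝ} (ha0 : 0 < a) (ha1 : a < 1)
    (g : X → ℝ) (hg : Measurable g) (E : Set X) (hEfin : μ E ≠ ⊤) :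
    ∫⁻ x in E, ENNReal.ofReal |g x| ∂μ ≤ ENNReal.ofReal (1 - a)⁻¹ *
      (⨆ t ∈ Set.Ioi (0 : ℝ), ENNReal.ofReal t * (μ {x | t < |g x|}) ^ a) * (μ E) ^ (1 - a) := by
  set W := (⨆ t ∈ Set.Ioi (0 : ℝ), ENNReal.ofReal t * (μ {x | t < |g x|}) ^ a) with hW
  have hWt : ∀ t : ℝ, 0 < t → ENNReal.ofReal t * (μ {x | t < |g x|}) ^ a ≤ W := fun t ht =>
    le_iSup₂ (f := fun t (_ : t ∈ Set.Ioi (0 : ℝ)) => ENNReal.ofReal t * (μ {x | t < |g x|}) ^ a)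
      t ht
  clear_value W
  have hb : 0 < 1 - a := by linarith
  have hC : ENNReal.ofReal (1 - a)⁻¹ ≠ 0 := by simpa using ha1
  rcases eq_or_ne (μ E) 0 with hE0 | hE0
  · rw [setLIntegral_measure_zero _ _ hE0]; exact zero_le
  rcases eq_or_ne W ⊤ with hWtop | hWtop
  · have : (μ E) ^ (1 - a) ≠ 0 := by simp [ENNReal.rpow_eq_zero_iff, hE0, hEfin]
    rw [hWtop, ENNReal.mul_top hC, ENNReal.top_mul this]; exact le_top
  have hlayer := lintegral_eq_lintegral_meas_lt (μ.restrict E) (f := fun x => |g x|)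
    (Filter.Eventually.of_forall fun x => abs_nonneg _) (by fun_prop)
  rw [hlayer]
  rcases eq_or_ne W 0 with hW0 | hW0
  · have : ∀ t ∈ Ioi (0 : ℝ), (μ.restrict E) {x | t < |g x|} = 0 := by
      intro t ht
      have h := hWt t ht
      rw [hW0, nonpos_iff_eq_zero, mul_eq_zero] at h
      have ht' : ENNReal.ofReal t ≠ 0 := by simpa using ht
      have h' := (ENNReal.rpow_eq_zero_iff_of_pos ha0).1 (h.resolve_left ht')
      exact le_antisymm ((Measure.restrict_apply_le _ _).trans h'.le) zero_le
    rw [setLIntegral_congr_fun measurableSet_Ioi this]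
    simp
  set w := W.toReal with hw
  set e := (μ E).toReal with he
  have hwpos : 0 < w := ENNReal.toReal_pos hW0 hWtop
  have hepos : 0 < e := ENNReal.toReal_pos hE0 hEfin
  have hWw : W = ENNReal.ofReal w := (ENNReal.ofReal_toReal hWtop).symm
  have hEe : μ E = ENNReal.ofReal e := (ENNReal.ofReal_toReal hEfin).symm
  set T := w * e ^ (-a) with hT
  have hTpos : 0 < T := by positivity
  have hs : -(1 / a) < -1 := by
    have : 1 < 1 / a := by rw [lt_div_iff₀ ha0]; linarith
    linarith
  have hm : ∀ t : ℝ, 0 < t →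
      μ {x | t < |g x|} ≤ ENNReal.ofReal (w ^ (1 / a) * t ^ (-(1 / a))) := by
    intro t ht
    have h := hWt t ht
    rw [mul_comm, ← ENNReal.le_div_iff_mul_le (Or.inl (by simpa using ht))
      (Or.inl ENNReal.ofReal_ne_top), hWw, ← ENNReal.ofReal_div_of_pos ht] at h
    have h2 := ENNReal.rpow_le_rpow h (by positivity : 0 ≤ 1 / a)
    rw [← ENNReal.rpow_mul, mul_one_div_cancel ha0.ne', ENNReal.rpow_one,
      ENNReal.ofReal_rpow_of_pos (by positivity)] at h2
    refine h2.trans (le_of_eq ?_)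
    rw [Real.div_rpow hwpos.le ht.le, Real.rpow_neg ht.le, div_eq_mul_inv]
  have hunion : Ioi (0 : ℝ) = Ioc 0 T ∪ Ioi T := (Ioc_union_Ioi_eq_Ioi hTpos.le).symm
  rw [hunion]
  refine (lintegral_union_le _ _ _).trans ?_
  have hA : ∫⁻ t in Ioc 0 T, (μ.restrict E) {x | t < |g x|} ≤ ENNReal.ofReal (T * e) := by
    calc _ ≤ ∫⁻ t in Ioc 0 T, μ E := lintegral_mono fun t => by
            refine (measure_mono (subset_univ _)).trans ?_
            simp
      _ = _ := by
        rw [setLIntegral_const, Real.volume_Ioc, hEe, ← ENNReal.ofReal_mul hepos.le, sub_zero,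
          mul_comm]
  have hB : ∫⁻ t in Ioi T, (μ.restrict E) {x | t < |g x|} ≤
      ENNReal.ofReal (w ^ (1 / a) * (-T ^ (-(1 / a) + 1) / (-(1 / a) + 1))) := by
    calc _ ≤ ∫⁻ t in Ioi T, ENNReal.ofReal (w ^ (1 / a) * t ^ (-(1 / a))) := by
            refine setLIntegral_mono' measurableSet_Ioi fun t ht => ?_
            exact (Measure.restrict_apply_le _ _).trans (hm t (hTpos.trans ht))
      _ = ENNReal.ofReal (∫ t in Ioi T, w ^ (1 / a) * t ^ (-(1 / a))) := by
            rw [ofReal_integral_eq_lintegral_ofReal]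
            · exact (integrableOn_Ioi_rpow_of_lt hs hTpos).const_mul _
            · refine (ae_restrict_iff' measurableSet_Ioi).2 (Filter.Eventually.of_forall fun t ht => ?_)
              have : 0 < t := hTpos.trans ht
              simp only [Pi.zero_apply]
              positivity
      _ = _ := by rw [integral_const_mul, integral_Ioi_rpow_of_lt hs hTpos]
  refine (add_le_add hA hB).trans (le_of_eq ?_)
  rw [← ENNReal.ofReal_add (by positivity), ghs_arith ha0 ha1 hwpos hepos, hWw, hEe,
    ENNReal.ofReal_rpow_of_pos hepos, ← ENNReal.ofReal_mul (by positivity),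
    ← ENNReal.ofReal_mul (by positivity)]
  have : -(1 / a) + 1 < 0 := by linarith
  have h2 : 0 < T ^ (-(1 / a) + 1) := by positivity
  have := div_pos_of_neg_of_neg (neg_neg_of_pos h2) this
  positivity

/-- The cutoff profile. -/
noncomputable def ghsPhi (t : ℝ) : ℝ := Real.smoothTransition (t ^ 2 - 1)

lemma ghsPhi_contDiff : ContDiff ℝ 1 ghsPhi := by
  unfold ghsPhi
  exact (Real.smoothTransition.contDiff (n := 1)).comp (by fun_prop)

lemma ghsPhi_zero {t : ℝ} (ht : |t| ≤ 1) : ghsPhi t = 0 := by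
  apply Real.smoothTransition.zero_of_nonpos
  have := (sq_le_one_iff_abs_le_one t).2 ht
  linarith

lemma ghsPhi_one {t : ℝ} (ht : 3 / 2 ≤ |t|) : ghsPhi t = 1 := by
  apply Real.smoothTransition.one_of_one_le
  have := sq_abs t
  nlinarith

lemma ghsPhi_deriv_zero {t : ℝ} (ht : ¬ (1 ≤ |t| ∧ |t| < 2)) : deriv ghsPhi t = 0 := by
  rcases lt_or_ge |t| 1 with h | h
  · have : ghsPhi =ᶠ[nhds t] fun _ => 0 := by
      filter_upwards [continuous_abs.continuousAt.eventually_lt_const h] with s hs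
      exact ghsPhi_zero hs.le
    rw [this.deriv_eq]; simp
  · have h2 : 2 ≤ |t| := by
      by_contra h'
      exact ht ⟨h, not_le.1 h'⟩
    have : ghsPhi =ᶠ[nhds t] fun _ => 1 := by
      filter_upwards [continuous_abs.continuousAt.eventually_const_lt
        (show 3 / 2 < |t| by linarith)] with s hs
      exact ghsPhi_one hs.le
    rw [this.deriv_eq]; simp

lemma ghsPhi_deriv_bound : ∃ M : ℝ, 0 < M ∧ ∀ t, |deriv ghsPhi t| ≤ M := by
  have hc : Continuous (deriv ghsPhi) := ghsPhi_contDiff.continuous_deriv le_rfl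
  have hs : HasCompactSupport (deriv ghsPhi) := by
    refine HasCompactSupport.intro (isCompact_Icc (a := (-2 : ℝ)) (b := 2)) fun t ht => ?_
    apply ghsPhi_deriv_zero
    rintro ⟨-, h⟩
    rw [abs_lt] at h
    exact ht ⟨h.1.le, h.2.le⟩
  obtain ⟨C, hC⟩ := hs.exists_bound_of_continuous hc
  exact ⟨max C 1, by positivity, fun t => (hC t).trans (le_max_left _ _)⟩

lemma ghs_capacity (n : ℕ) (p : ℝ) (hp : 1 < p) (hpn : p < n) :
    ∃ K : ℝ, 0 < K ∧ ∀ u : EuclideanSpace ℝ (Fin n) → ℝ, ContDiff ℝ 1 u → HasCompactSupport u →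
      ∀ s : ℝ, 0 < s →
        ENNReal.ofReal (s ^ p) * (volume {x | 2 * s ≤ |u x|}) ^ (1 - p / n) ≤
          ENNReal.ofReal K *
            ∫⁻ x in {x | s ≤ |u x| ∧ |u x| < 2 * s}, ENNReal.ofReal (‖fderiv ℝ u x‖ ^ p) := by
  obtain ⟨M, hM, hMb⟩ := ghsPhi_deriv_bound
  have hp0 : 0 < p := by linarith
  have hn0 : (0 : ℝ) < n := by linarith
  set q : ℝ := (p⁻¹ - (n : ℝ)⁻¹)⁻¹ with hq
  have hq0 : 0 < q := inv_pos.2 (sub_pos.2 (inv_strictAnti₀ hp0 hpn))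
  have hpq : p / q = 1 - p / n := by
    rw [hq, div_inv_eq_mul]; field_simp
  set P : NNReal := ⟨p, hp0.le⟩ with hP
  set Q : NNReal := ⟨q, hq0.le⟩ with hQ
  set S : NNReal := SNormLESNormFDerivOfEqConst ℝ (volume : Measure (EuclideanSpace ℝ (Fin n))) P
  refine ⟨((S + 1) * M) ^ p, by positivity, fun u hu hcu s hs => ?_⟩
  set v : EuclideanSpace ℝ (Fin n) → ℝ := fun x => ghsPhi (s⁻¹ * u x) with hv
  have hvC : ContDiff ℝ 1 v := ghsPhi_contDiff.comp (contDiff_const.mul hu)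
  have hvs : HasCompactSupport v := by
    refine hcu.comp_left (g := fun y => ghsPhi (s⁻¹ * y)) ?_
    exact ghsPhi_zero (by simp)
  have hsob := eLpNorm_le_eLpNorm_fderiv_of_eq (F := ℝ)
    (volume : Measure (EuclideanSpace ℝ (Fin n))) hvC hvs (p := P) (p' := Q)
    (by rw [← NNReal.coe_le_coe]; exact hp.le)
    (by simpa using (by exact_mod_cast hn0 : 0 < n))
    (by
      rw [finrank_euclideanSpace, Fintype.card_fin]
      change q⁻¹ = p⁻¹ - (n : ℝ)⁻¹
      rw [hq, inv_inv])
  have hP0 : P ≠ 0 := by rw [Ne, ← NNReal.coe_eq_zero]; exact hp0.ne'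
  have hQ0 : Q ≠ 0 := by rw [Ne, ← NNReal.coe_eq_zero]; exact hq0.ne'
  have hPp : (P : ℝ) = p := rfl
  have hQq : (Q : ℝ) = q := rfl
  rw [eLpNorm_nnreal_eq_lintegral hP0, eLpNorm_nnreal_eq_lintegral hQ0, hPp, hQq] at hsob
  have hmeas : MeasurableSet {x | 2 * s ≤ |u x|} :=
    measurableSet_le measurable_const hu.continuous.abs.measurable
  have hmeasB : MeasurableSet {x | s ≤ |u x| ∧ |u x| < 2 * s} :=
    (measurableSet_le measurable_const hu.continuous.abs.measurable).inter
      (measurableSet_lt hu.continuous.abs.measurable measurable_const)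
  -- lower bound
  have hlow : volume {x | 2 * s ≤ |u x|} ≤ ∫⁻ x, ‖v x‖ₑ ^ q := by
    calc volume {x | 2 * s ≤ |u x|} = ∫⁻ x in {x | 2 * s ≤ |u x|}, 1 := by simp
      _ ≤ ∫⁻ x in {x | 2 * s ≤ |u x|}, ‖v x‖ₑ ^ q := by
        refine setLIntegral_mono' hmeas fun x hx => ?_
        have : v x = 1 := by
          apply ghsPhi_one
          rw [abs_mul, abs_of_pos (inv_pos.2 hs), inv_mul_eq_div, le_div_iff₀ hs]
          have : 2 * s ≤ |u x| := hx
          linarith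
        simp [this]
      _ ≤ _ := setLIntegral_le_lintegral _ _
  -- upper bound
  set D := ∫⁻ x in {x | s ≤ |u x| ∧ |u x| < 2 * s}, ENNReal.ofReal (‖fderiv ℝ u x‖ ^ p) with hD
  have hfd : ∀ x, fderiv ℝ v x = (deriv ghsPhi (s⁻¹ * u x) * s⁻¹) • fderiv ℝ u x := by
    intro x
    have h1 : HasDerivAt ghsPhi (deriv ghsPhi (s⁻¹ * u x)) (s⁻¹ * u x) :=
      (ghsPhi_contDiff.differentiable one_ne_zero).differentiableAt.hasDerivAt
    have h2 : HasFDerivAt (fun x => s⁻¹ * u x) (s⁻¹ • fderiv ℝ u x) x :=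
      ((hu.differentiable one_ne_zero).differentiableAt.hasFDerivAt).const_mul _
    have := (h1.comp_hasFDerivAt x h2).fderiv
    rw [smul_smul] at this
    exact this
  have hup : ∫⁻ x, ‖fderiv ℝ v x‖ₑ ^ p ≤ ENNReal.ofReal ((M * s⁻¹) ^ p) * D := by
    calc ∫⁻ x, ‖fderiv ℝ v x‖ₑ ^ p
        = ∫⁻ x in {x | s ≤ |u x| ∧ |u x| < 2 * s}, ‖fderiv ℝ v x‖ₑ ^ p := by
          symm
          apply setLIntegral_eq_of_support_subset
          intro x hx
          by_contra hx'
          apply hx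
          have : deriv ghsPhi (s⁻¹ * u x) = 0 := by
            apply ghsPhi_deriv_zero
            rw [abs_mul, abs_of_pos (inv_pos.2 hs), inv_mul_eq_div, le_div_iff₀ hs, div_lt_iff₀ hs,
              one_mul]
            exact hx'
          have h0 : ‖fderiv ℝ v x‖ = 0 := by rw [hfd x, this, zero_mul, zero_smul, norm_zero]
          change ‖fderiv ℝ v x‖ₑ ^ p = 0
          rw [← ofReal_norm, h0, ENNReal.ofReal_zero, ENNReal.zero_rpow_of_pos hp0]
      _ ≤ ∫⁻ x in {x | s ≤ |u x| ∧ |u x| < 2 * s},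
            ENNReal.ofReal ((M * s⁻¹) ^ p) * ENNReal.ofReal (‖fderiv ℝ u x‖ ^ p) := by
          refine lintegral_mono fun x => ?_
          rw [← ofReal_norm, ENNReal.ofReal_rpow_of_nonneg (norm_nonneg _) hp0.le,
            ← ENNReal.ofReal_mul (by positivity), ← Real.mul_rpow (by positivity) (norm_nonneg _)]
          apply ENNReal.ofReal_le_ofReal
          apply Real.rpow_le_rpow (norm_nonneg _) _ hp0.le
          rw [hfd x, norm_smul, norm_mul, Real.norm_eq_abs, Real.norm_eq_abs,
            abs_of_pos (inv_pos.2 hs)]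
          gcongr
          exact hMb _
      _ = _ := by rw [lintegral_const_mul' _ _ ENNReal.ofReal_ne_top]
  -- combine
  have h1 : (volume {x | 2 * s ≤ |u x|}) ^ (1 - p / n) ≤
      (S : ENNReal) ^ p * (ENNReal.ofReal ((M * s⁻¹) ^ p) * D) := by
    calc (volume {x | 2 * s ≤ |u x|}) ^ (1 - p / n)
        ≤ (∫⁻ x, ‖v x‖ₑ ^ q) ^ (1 - p / n) := by
          apply ENNReal.rpow_le_rpow hlow
          rw [← hpq]; positivity
      _ = ((∫⁻ x, ‖v x‖ₑ ^ q) ^ (1 / q)) ^ p := by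
          rw [← ENNReal.rpow_mul, ← hpq]; congr 1; ring
      _ ≤ (S * (∫⁻ x, ‖fderiv ℝ v x‖ₑ ^ p) ^ (1 / p)) ^ p := ENNReal.rpow_le_rpow hsob hp0.le
      _ = (S : ENNReal) ^ p * (∫⁻ x, ‖fderiv ℝ v x‖ₑ ^ p) := by
          rw [ENNReal.mul_rpow_of_nonneg _ _ hp0.le, ← ENNReal.rpow_mul, one_div_mul_cancel hp0.ne',
            ENNReal.rpow_one]
      _ ≤ _ := by gcongr
  calc _ ≤ ENNReal.ofReal (s ^ p) * ((S : ENNReal) ^ p * (ENNReal.ofReal ((M * s⁻¹) ^ p) * D)) := by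
        gcongr
    _ = ENNReal.ofReal ((S * M) ^ p) * D := by
        rw [← ENNReal.ofReal_coe_nnreal (p := S), ENNReal.ofReal_rpow_of_nonneg S.coe_nonneg hp0.le,
          ← mul_assoc, ← mul_assoc, ← ENNReal.ofReal_mul (by positivity),
          ← ENNReal.ofReal_mul (by positivity), ← Real.mul_rpow hs.le S.coe_nonneg,
          ← Real.mul_rpow (by positivity) (by positivity)]
        congr 3
        field_simp
    _ ≤ _ := by
        gcongr
        linarith

theorem generalized_hardy_sobolev (n : ℕ) (p : ℝ) (hp : 1 < p) (hpn : p < n) :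
    ∃ C : ℝ, 0 < C ∧
      ∀ g : EuclideanSpace ℝ (Fin n) → ℝ, Measurable g →
      ∀ u : EuclideanSpace ℝ (Fin n) → ℝ, ContDiff ℝ 1 u → HasCompactSupport u →
        ∫⁻ x, ENNReal.ofReal (|g x| * |u x| ^ p) ≤
          ENNReal.ofReal C *
            (⨆ t ∈ Set.Ioi (0 : ℝ),
              ENNReal.ofReal t * (volume {x : EuclideanSpace ℝ (Fin n) | t < |g x|}) ^ (p / n)) *
            ∫⁻ x, ENNReal.ofReal (‖fderiv ℝ u x‖ ^ p) := by
  obtain ⟨K, hK, hcap⟩ := ghs_capacity n p hp hpn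
  have hp0 : 0 < p := by linarith
  have hn0 : (0 : ℝ) < n := by linarith
  have ha0 : 0 < p / n := by positivity
  have ha1 : p / n < 1 := (div_lt_one hn0).2 hpn
  have hb : 0 < 1 - p / n := by linarith
  refine ⟨(4 : ℝ) ^ p * (1 - p / n)⁻¹ * K, by positivity, fun g hg u hu hcu => ?_⟩
  set W := (⨆ t ∈ Set.Ioi (0 : ℝ),
    ENNReal.ofReal t * (volume {x : EuclideanSpace ℝ (Fin n) | t < |g x|}) ^ (p / n)) with hW
  have humeas : Measurable fun x => |u x| := hu.continuous.abs.measurable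
  set A : ℤ → Set (EuclideanSpace ℝ (Fin n)) :=
    fun k => {x | 2 * (2 : ℝ) ^ k ≤ |u x| ∧ |u x| < 4 * (2 : ℝ) ^ k} with hA
  set B : ℤ → Set (EuclideanSpace ℝ (Fin n)) :=
    fun k => {x | (2 : ℝ) ^ k ≤ |u x| ∧ |u x| < 2 * (2 : ℝ) ^ k} with hB
  have hAm : ∀ k, MeasurableSet (A k) := fun k =>
    (measurableSet_le measurable_const humeas).inter (measurableSet_lt humeas measurable_const)
  have hBm : ∀ k, MeasurableSet (B k) := fun k =>
    (measurableSet_le measurable_const humeas).inter (measurableSet_lt humeas measurable_const)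
  have hBd : Pairwise (Function.onFun Disjoint B) := by
    have aux : ∀ i j : ℤ, i < j → Disjoint (B i) (B j) := by
      intro i j hij
      rw [Set.disjoint_left]
      rintro x ⟨-, h1⟩ ⟨h2, -⟩
      have h3 : (2 : ℝ) ^ (i + 1) ≤ 2 ^ j := zpow_le_zpow_right₀ (by norm_num) (by omega)
      rw [zpow_add_one₀ (by norm_num)] at h3
      linarith
    intro i j hij
    rcases lt_or_gt_of_ne hij with h | h
    · exact aux i j h
    · exact (aux j i h).symm
  have hE : ∀ k : ℤ, volume {x | 2 * (2 : ℝ) ^ k ≤ |u x|} ≠ ⊤ := by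
    intro k
    refine ne_top_of_le_ne_top (hcu.isCompact.measure_lt_top (μ := volume)).ne
      (measure_mono fun x hx => ?_)
    apply subset_tsupport
    intro h
    have h1 : 2 * (2 : ℝ) ^ k ≤ |u x| := hx
    rw [h, abs_zero] at h1
    have : (0 : ℝ) < 2 ^ k := by positivity
    linarith
  have hterm : ∀ k : ℤ, ∫⁻ x in A k, ENNReal.ofReal (|g x| * |u x| ^ p) ≤
      ENNReal.ofReal ((4 : ℝ) ^ p * (1 - p / n)⁻¹ * K) * W *
        ∫⁻ x in B k, ENNReal.ofReal (‖fderiv ℝ u x‖ ^ p) := by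
    intro k
    have hs : (0 : ℝ) < 2 ^ k := by positivity
    calc ∫⁻ x in A k, ENNReal.ofReal (|g x| * |u x| ^ p)
        ≤ ∫⁻ x in A k, ENNReal.ofReal ((4 * (2 : ℝ) ^ k) ^ p) * ENNReal.ofReal |g x| := by
          refine setLIntegral_mono' (hAm k) fun x hx => ?_
          rw [← ENNReal.ofReal_mul (by positivity), mul_comm]
          apply ENNReal.ofReal_le_ofReal
          gcongr
          exact hx.2.le
      _ = ENNReal.ofReal ((4 * (2 : ℝ) ^ k) ^ p) * ∫⁻ x in A k, ENNReal.ofReal |g x| := by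
          rw [lintegral_const_mul' _ _ ENNReal.ofReal_ne_top]
      _ ≤ ENNReal.ofReal ((4 * (2 : ℝ) ^ k) ^ p) *
            ∫⁻ x in {x | 2 * (2 : ℝ) ^ k ≤ |u x|}, ENNReal.ofReal |g x| := by
          gcongr
          exact fun x hx => hx.1
      _ ≤ ENNReal.ofReal ((4 * (2 : ℝ) ^ k) ^ p) * (ENNReal.ofReal (1 - p / n)⁻¹ * W *
            (volume {x | 2 * (2 : ℝ) ^ k ≤ |u x|}) ^ (1 - p / n)) := by
          gcongr
          exact ghs_weak volume ha0 ha1 g hg _ (hE k)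
      _ = ENNReal.ofReal ((4 : ℝ) ^ p) * ENNReal.ofReal (1 - p / n)⁻¹ * W *
            (ENNReal.ofReal (((2 : ℝ) ^ k) ^ p) *
              (volume {x | 2 * (2 : ℝ) ^ k ≤ |u x|}) ^ (1 - p / n)) := by
          rw [Real.mul_rpow (by norm_num) hs.le, ENNReal.ofReal_mul (by positivity)]
          ring
      _ ≤ ENNReal.ofReal ((4 : ℝ) ^ p) * ENNReal.ofReal (1 - p / n)⁻¹ * W *
            (ENNReal.ofReal K * ∫⁻ x in B k, ENNReal.ofReal (‖fderiv ℝ u x‖ ^ p)) := by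
          exact mul_le_mul' le_rfl (hcap u hu hcu _ hs)
      _ = _ := by
          rw [ENNReal.ofReal_mul (by positivity), ENNReal.ofReal_mul (by positivity)]
          ring
  have hsupp : Function.support (fun x => ENNReal.ofReal (|g x| * |u x| ^ p)) ⊆ ⋃ k, A k := by
    intro x hx
    have hux : 0 < |u x| := by
      rw [abs_pos]
      intro h
      apply hx
      simp [h, Real.zero_rpow hp0.ne']
    obtain ⟨m, hm⟩ := exists_mem_Ico_zpow hux (one_lt_two)
    refine mem_iUnion.2 ⟨m - 1, ?_⟩
    have h1 : (2 : ℝ) ^ m = 2 ^ (m - 1) * 2 := by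
      rw [← zpow_add_one₀ (by norm_num)]; simp
    have h2 : (2 : ℝ) ^ (m + 1) = 2 ^ (m - 1) * 2 * 2 := by
      rw [zpow_add_one₀ (by norm_num), h1]
    have h3 := hm.1
    have h4 := hm.2
    rw [h1] at h3
    rw [h2] at h4
    exact ⟨by linarith, by linarith⟩
  calc ∫⁻ x, ENNReal.ofReal (|g x| * |u x| ^ p)
      = ∫⁻ x in ⋃ k, A k, ENNReal.ofReal (|g x| * |u x| ^ p) :=
        (setLIntegral_eq_of_support_subset hsupp).symm
    _ ≤ ∑' k, ∫⁻ x in A k, ENNReal.ofReal (|g x| * |u x| ^ p) := lintegral_iUnion_le _ _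
    _ ≤ ∑' k, ENNReal.ofReal ((4 : ℝ) ^ p * (1 - p / n)⁻¹ * K) * W *
          ∫⁻ x in B k, ENNReal.ofReal (‖fderiv ℝ u x‖ ^ p) := ENNReal.tsum_le_tsum hterm
    _ = ENNReal.ofReal ((4 : ℝ) ^ p * (1 - p / n)⁻¹ * K) * W *
          ∫⁻ x in ⋃ k, B k, ENNReal.ofReal (‖fderiv ℝ u x‖ ^ p) := by
        rw [ENNReal.tsum_mul_left, lintegral_iUnion hBm hBd]
    _ ≤ _ := by
        gcongr
        exact Measure.restrict_le_self
end

section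
/- Let N be a natural number and p a real number with 1 < p < N, and let r_* > 1. Let φ : ℝ → ℝ be differentiable on a neighborhood of r_* with φ'(r_*) = 0, and define F(r) := r^(N−1)·sign(φ'(r))·|φ'(r)|^(p−1). Assume F is differentiable at r_* with derivative F'(r_*) < 0. Then there exist constants c₀ > 0 and ρ₀ > 0 such that for all real r with |r − r_*| < ρ₀: |φ'(r)| ≥ c₀·|r − r_*|^(1/(p−1)). -/
open Real Set

/-- The radial quantity `F(r) = r^(N-1) |φ'(r)|^(p-2) φ'(r)`, written with
real exponents via the sign function. -/
noncomputable def radialF (N : ℕ) (p : ℝ) (φ : ℝ → ℝ) (r : ℝ) : ℝ :=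
  r ^ ((N : ℝ) - 1) * Real.sign (deriv φ r) * |deriv φ r| ^ (p - 1)

/-- Non-degeneracy of the critical point (Lemma 3.1): near `r_*` one has
`|φ'(r)| ≥ c₀ |r - r_*|^(1/(p-1))`. -/
theorem critical_point_nondegeneracy (N : ℕ) (p : ℝ) (hp : 1 < p) (hpN : p < N)
    (rstar : ℝ) (hrstar : 1 < rstar) (φ : ℝ → ℝ)
    (hφdiff : ∃ ε > (0 : ℝ), ∀ r : ℝ, |r - rstar| < ε → DifferentiableAt ℝ φ r)
    (hcrit : deriv φ rstar = 0)
    (hFdiff : DifferentiableAt ℝ (radialF N p φ) rstar)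
    (hF' : deriv (radialF N p φ) rstar < 0) :
    ∃ c₀ > (0 : ℝ), ∃ ρ₀ > (0 : ℝ), ∀ r : ℝ, |r - rstar| < ρ₀ →
      c₀ * |r - rstar| ^ (1 / (p - 1)) ≤ |deriv φ r| := by
  set a := -deriv (radialF N p φ) rstar with ha
  have hapos : 0 < a := by linarith
  have hp1 : 0 < p - 1 := by linarith
  have hN : 0 ≤ (N : ℝ) - 1 := by linarith
  have hF0 : radialF N p φ rstar = 0 := by simp [radialF, hcrit]
  have hd := hFdiff.hasDerivAt.isLittleO.def (half_pos hapos)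
  obtain ⟨δ, hδ, hball⟩ := Metric.eventually_nhds_iff.1 hd
  set M := (rstar + 1) ^ ((N : ℝ) - 1) with hM
  have hMpos : 0 < M := Real.rpow_pos_of_pos (by linarith) _
  refine ⟨(a / 2 / M) ^ (1 / (p - 1)), Real.rpow_pos_of_pos (by positivity) _,
    min δ 1, lt_min hδ one_pos, fun r hr => ?_⟩
  have h1 := hball (y := r) (by rw [Real.dist_eq]; exact hr.trans_le (min_le_left _ _))
  have h2 : |r - rstar| < 1 := hr.trans_le (min_le_right _ _)
  obtain ⟨h3, h4⟩ := abs_lt.1 h2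
  have hrpos : 0 < r := by linarith
  simp only [hF0, smul_eq_mul, Real.norm_eq_abs, sub_zero] at h1
  have h5 : |(r - rstar) * deriv (radialF N p φ) rstar| = a * |r - rstar| := by
    rw [abs_mul, abs_of_neg hF', mul_comm]
  have h6 := abs_sub_abs_le_abs_sub ((r - rstar) * deriv (radialF N p φ) rstar) (radialF N p φ r)
  rw [abs_sub_comm, h5] at h6
  have h7 : a / 2 * |r - rstar| ≤ |radialF N p φ r| := by linarith
  have hsign : |Real.sign (deriv φ r)| ≤ 1 := by
    rcases Real.sign_apply_eq (deriv φ r) with h | h | h <;> rw [h] <;> norm_num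
  have hpw : 0 ≤ |deriv φ r| ^ (p - 1) := Real.rpow_nonneg (abs_nonneg _) _
  have h8 : |radialF N p φ r| ≤ M * |deriv φ r| ^ (p - 1) := by
    unfold radialF
    rw [abs_mul, abs_mul, abs_of_nonneg hpw, abs_of_pos (Real.rpow_pos_of_pos hrpos _)]
    refine mul_le_mul_of_nonneg_right ?_ hpw
    calc r ^ ((N : ℝ) - 1) * |Real.sign (deriv φ r)| ≤ r ^ ((N : ℝ) - 1) * 1 :=
          mul_le_mul_of_nonneg_left hsign (Real.rpow_nonneg hrpos.le _)
      _ ≤ M := by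
          rw [mul_one]
          exact Real.rpow_le_rpow hrpos.le (by linarith) hN
  have h9 : a / 2 / M * |r - rstar| ≤ |deriv φ r| ^ (p - 1) := by
    rw [div_mul_eq_mul_div, div_le_iff₀ hMpos]
    linarith
  rw [← Real.mul_rpow (by positivity) (abs_nonneg _)]
  calc _ ≤ (|deriv φ r| ^ (p - 1)) ^ (1 / (p - 1)) :=
        Real.rpow_le_rpow (by positivity) h9 (by positivity)
    _ = |deriv φ r| := by
        rw [← Real.rpow_mul (abs_nonneg _), mul_one_div_cancel hp1.ne', Real.rpow_one]
end
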